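/- Let G be a connected simple graph on a finite vertex set V with shortest-path distance d, let A be a nonempty set of anchor vertices, and let d̂(u,v) = min_{a ∈ A} (d(u,a) + d(a,v)). Fix a coverage radius c ≥ 0 and a coverage ratio CR ∈ [0,1], and suppose the set of covered vertices (those within distance c of some anchor in A) has cardinality at least CR·|V|. Then the number of ordered pairs (u,v) ∈ V × V for which the estimation error satisfies d̂(u,v) − d(u,v) ≤ 2c is at least (1 − (1 − CR)²)·|V|². Equivalently, if u and v are drawn independently and uniformly from V, then with probability at least 1 − (1 − CR)² the error of the estimated shortest-path distance is bounded by 2c. -/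

import Mathlib

/-!
If `u` is within distance `c` of an anchor `a`, going from `a` to `v` by way of `u` shows
`d(u,a) + d(a,v) ≤ 2 d(u,a) + d(u,v) ≤ d(u,v) + 2c`, and symmetrically if `v` is covered.
So a pair whose error exceeds `2c` has both coordinates uncovered. There are at most
`(1 - CR) |V|` uncovered vertices, hence at most `(1 - CR)² |V|²` such pairs.
-/

section Counting

variable {α β R : Type*} [Fintype α] [Fintype β] [DecidableEq α] [DecidableEq β]

lemma natCast_card_compl [AddGroupWithOne R] (s : Finset α) :
    (sᶜ.card : R) = Fintype.card α - s.card := by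
  rw [Finset.card_compl, Nat.cast_sub s.card_le_univ]

lemma card_compl_le_of_mul_card_le [Ring R] [PartialOrder R] [IsOrderedAddMonoid R]
    {s : Finset α} {δ : R} (hs : δ * Fintype.card α ≤ s.card) :
    (sᶜ.card : R) ≤ (1 - δ) * Fintype.card α := by
  rw [natCast_card_compl, sub_mul, one_mul]
  exact sub_le_sub_left hs _

lemma mul_card_mul_card_le_card_compl_product_compl [CommRing R] [PartialOrder R]
    [IsOrderedRing R] {s : Finset α} {t : Finset β} {δ ε : R}
    (hs : δ * Fintype.card α ≤ s.card) (ht : ε * Fintype.card β ≤ t.card) :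
    (1 - (1 - δ) * (1 - ε)) * (Fintype.card α * Fintype.card β) ≤ ((sᶜ ×ˢ tᶜ)ᶜ.card : R) := by
  have hs' := card_compl_le_of_mul_card_le hs
  have ht' := card_compl_le_of_mul_card_le ht
  calc (1 - (1 - δ) * (1 - ε)) * (Fintype.card α * Fintype.card β : R)
      = Fintype.card α * Fintype.card β -
          (1 - δ) * Fintype.card α * ((1 - ε) * Fintype.card β) := by ring
    _ ≤ Fintype.card α * Fintype.card β - sᶜ.card * tᶜ.card :=
        sub_le_sub_left (mul_le_mul hs' ht' (Nat.cast_nonneg _) ((Nat.cast_nonneg _).trans hs')) _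
    _ = ((sᶜ ×ˢ tᶜ)ᶜ.card : R) := by
        rw [natCast_card_compl (sᶜ ×ˢ tᶜ), Fintype.card_prod, Finset.card_product, Nat.cast_mul,
          Nat.cast_mul]

end Counting

section AnchorDist

variable {V M : Type*}

/-- The vertex `u` is covered with radius `c`: some anchor in `A` is within distance `c` of `u`.
The distance is an arbitrary function `d`, so that weighted or extended distances are allowed. -/
def IsCovered [LE M] (d : V → V → M) (A : Finset V) (c : M) (u : V) : Prop :=
  ∃ a ∈ A, d u a ≤ c

/-- The estimated distance `d̂(u,v)`: the infimum of the lengths of the detours from `u` to `v`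
through an anchor in `A`. Nonemptiness of `A` is an argument because `M` need not have a top
element. -/
def anchorDist [Add M] [SemilatticeInf M] (d : V → V → M) (A : Finset V) (hA : A.Nonempty)
    (u v : V) : M :=
  A.inf' hA fun a => d u a + d a v

variable {d : V → V → M} {A : Finset V}

lemma anchorDist_comm [AddCommMagma M] [SemilatticeInf M] (hcomm : ∀ u v, d u v = d v u)
    (hA : A.Nonempty) (u v : V) :
    anchorDist d A hA u v = anchorDist d A hA v u :=
  Finset.inf'_congr hA rfl fun a _ => by rw [hcomm u a, hcomm a v, add_comm]

variable [AddCommMonoid M] [SemilatticeInf M] [IsOrderedAddMonoid M] {c : M} {u v : V}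

lemma IsCovered.anchorDist_le_left (hcomm : ∀ u v, d u v = d v u)
    (htri : ∀ u v w, d u w ≤ d u v + d v w) (hA : A.Nonempty) (hu : IsCovered d A c u) :
    anchorDist d A hA u v ≤ d u v + 2 • c := by
  obtain ⟨a, ha, hac⟩ := hu
  calc anchorDist d A hA u v
      ≤ d u a + d a v := Finset.inf'_le _ ha
    _ ≤ d u a + (d a u + d u v) := by gcongr; exact htri a u v
    _ = d u v + 2 • d u a := by rw [hcomm a u]; abel
    _ ≤ d u v + 2 • c := by gcongr

lemma IsCovered.anchorDist_le_right (hcomm : ∀ u v, d u v = d v u)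
    (htri : ∀ u v w, d u w ≤ d u v + d v w) (hA : A.Nonempty) (hv : IsCovered d A c v) :
    anchorDist d A hA u v ≤ d u v + 2 • c := by
  rw [anchorDist_comm hcomm, hcomm u v]
  exact hv.anchorDist_le_left hcomm htri hA

theorem anchor_error_bound_probability_general {R : Type*} [Fintype V] [CommRing R]
    [PartialOrder R] [IsOrderedRing R] (d : V → V → M) (hcomm : ∀ u v, d u v = d v u)
    (htri : ∀ u v w, d u w ≤ d u v + d v w) (A : Finset V) (hA : A.Nonempty) (c : M) (CR : R)
    {_ : DecidablePred (IsCovered d A c)}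
    {_ : DecidablePred fun p : V × V => anchorDist d A hA p.1 p.2 ≤ d p.1 p.2 + 2 • c}
    (hcov : CR * Fintype.card V ≤ ((Finset.univ.filter (IsCovered d A c)).card : R)) :
    (1 - (1 - CR) ^ 2) * (Fintype.card V : R) ^ 2 ≤
      ((Finset.univ.filter fun p : V × V =>
        anchorDist d A hA p.1 p.2 ≤ d p.1 p.2 + 2 • c).card : R) := by
  classical
  set C := Finset.univ.filter (IsCovered d A c)
  have hsub : (Cᶜ ×ˢ Cᶜ)ᶜ ⊆ Finset.univ.filter fun p : V × V =>
      anchorDist d A hA p.1 p.2 ≤ d p.1 p.2 + 2 • c := by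
    intro p hp
    have hp' : IsCovered d A c p.1 ∨ IsCovered d A c p.2 := by
      simpa [C, or_iff_not_imp_left] using hp
    exact Finset.mem_filter.mpr ⟨Finset.mem_univ p,
      hp'.elim (·.anchorDist_le_left hcomm htri hA) (·.anchorDist_le_right hcomm htri hA)⟩
  calc (1 - (1 - CR) ^ 2) * (Fintype.card V : R) ^ 2
      = (1 - (1 - CR) * (1 - CR)) * (Fintype.card V * Fintype.card V) := by rw [sq, sq]
    _ ≤ ((Cᶜ ×ˢ Cᶜ)ᶜ.card : R) := mul_card_mul_card_le_card_compl_product_compl hcov hcov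
    _ ≤ _ := Nat.mono_cast (Finset.card_le_card hsub)

end AnchorDist

open Classical in
/-- For a connected simple graph `G` on a finite vertex set `V`,
a nonempty anchor set `A`, coverage radius `c ≥ 0` and coverage ratio `CR ∈ [0,1]`,
if the set of covered vertices has cardinality at least `CR * |V|`, then the number of
ordered pairs `(u,v)` whose estimation error satisfies `d̂(u,v) - d(u,v) ≤ 2c` is at least
`(1 - (1 - CR)^2) * |V|^2`. -/
theorem anchor_error_bound_probability {V : Type*} [Fintype V] (G : SimpleGraph V)
    (hG : G.Connected) (A : Finset V) (hA : A.Nonempty) (c : ℕ) (CR : ℝ)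
    (hCR0 : 0 ≤ CR) (hCR1 : CR ≤ 1)
    (hcov : CR * (Fintype.card V : ℝ) ≤
      ((Finset.univ.filter (fun u : V => ∃ a ∈ A, G.dist u a ≤ c)).card : ℝ)) :
    (1 - (1 - CR) ^ 2) * (Fintype.card V : ℝ) ^ 2 ≤
      ((Finset.univ.filter (fun p : V × V =>
          A.inf' hA (fun a => G.dist p.1 a + G.dist a p.2) ≤ G.dist p.1 p.2 + 2 * c)).card : ℝ) :=
  anchor_error_bound_probability_general G.dist (fun _ _ => G.dist_comm)
    (fun _ _ _ => hG.dist_triangle) A hA c CR hcov
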